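/- Let X be a real vector space and let A be a nonempty convex subset of X with cor(A) ≠ ∅. Then every set obtained from A by finitely many successive applications, in any order, of the algebraic closure operation S ↦ lin(S) and the complementation operation S ↦ X \ S belongs to the eight-element family {A, X \ A, lin(A), X \ lin(A), lin(X \ A), X \ lin(X \ A), lin(X \ lin(A)), X \ lin(X \ lin(A))}. In particular, at most 8 distinct sets can be formed from A by these two operations. -/

import Mathlib

/-!
For a convex set `S`, the complement of `algLin Sᶜ` is exactly `algCor S`
(`compl_algLin_compl`). Hence everything reduces to how `algLin` and `algCor` interact on a
convex set with nonempty core. The key fact is that, for `c ∈ algCor S` and `x ∈ algLin S`, the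
half-open segment from `c` to `x` (without `x`) lies in `algCor S` (`segment_algLin_mem_cor`).
It implies that `algLin S` is convex, that `algLin` is idempotent on `S`, that
`algLin (algCor S) = algLin S`, and that `algCor (algCor S) = algCor S`, i.e. that `algLin` is
idempotent on `Sᶜ`. Applying these four facts to `A` and to the convex set `algLin A` shows
that the family of eight sets is closed under `algLin`; closure under complements is clear.
-/

/-- The algebraic interior (core) of a set `S` in a real vector space. -/
def algCor {X : Type*} [AddCommGroup X] [Module ℝ X] (S : Set X) : Set X :=
  {x | ∀ y : X, ∃ lb : ℝ, 0 < lb ∧ ∀ lam : ℝ, lam ∈ Set.Icc (0 : ℝ) lb → x + lam • y ∈ S}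

/-- The algebraic closure (lin) of a set `S` in a real vector space: `S` together with
all points linearly accessible from `S`. -/
def algLin {X : Type*} [AddCommGroup X] [Module ℝ X] (S : Set X) : Set X :=
  S ∪ {xb | ∃ x ∈ S, x ≠ xb ∧
    ∀ lam : ℝ, lam ∈ Set.Ioc (0 : ℝ) 1 → lam • x + (1 - lam) • xb ∈ S}

/-- The two Kuratowski-type operations: algebraic closure and complementation. -/
inductive KOp : Type
  | lin : KOp
  | compl : KOp

/-- Apply a single operation to a set. -/
def applyKOp {X : Type*} [AddCommGroup X] [Module ℝ X] : KOp → Set X → Set X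
  | KOp.lin, S => algLin S
  | KOp.compl, S => Sᶜ

/-- Apply a finite word of operations to a set (rightmost symbol applied first). -/
def applyKOps {X : Type*} [AddCommGroup X] [Module ℝ X] (w : List KOp) (A : Set X) :
    Set X :=
  w.foldr applyKOp A

section Aux

variable {X : Type*} [AddCommGroup X] [Module ℝ X] {S T : Set X} {c x : X}

theorem algCor_subset (S : Set X) : algCor S ⊆ S := by
  intro x hx
  obtain ⟨lb, hlb, h⟩ := hx 0
  simpa using h 0 ⟨le_rfl, hlb.le⟩

theorem algCor_mono (h : S ⊆ T) : algCor S ⊆ algCor T := by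
  intro x hx y
  obtain ⟨lb, hlb, h'⟩ := hx y
  exact ⟨lb, hlb, fun l hl => h (h' l hl)⟩

theorem algLin_mono (h : S ⊆ T) : algLin S ⊆ algLin T := by
  rintro x (hx | ⟨a, ha, hne, hs⟩)
  · exact Or.inl (h hx)
  · exact Or.inr ⟨a, h ha, hne, fun l hl => h (hs l hl)⟩

theorem mem_algLin_of_segment (hc : c ∈ S)
    (h : ∀ t ∈ Set.Ioc (0 : ℝ) 1, t • c + (1 - t) • x ∈ S) : x ∈ algLin S := by
  by_cases hcx : c = x
  · exact Or.inl (hcx ▸ hc)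
  · exact Or.inr ⟨c, hc, hcx, h⟩

/-- A point of the half-open segment from `c` to `x` also lies on the half-open segment from
`c` to some point of that segment (nearer to `x`). -/
theorem exists_resplit (c x : X) {t : ℝ} (ht : t ∈ Set.Ioc (0 : ℝ) 1) :
    ∃ u ∈ Set.Ioc (0 : ℝ) 1, ∃ v ∈ Set.Ioc (0 : ℝ) 1,
      t • c + (1 - t) • x = u • c + (1 - u) • (v • c + (1 - v) • x) := by
  obtain ⟨h0, h1⟩ := ht
  have h2 : 0 < 2 - t := by linarith
  refine ⟨t / (2 - t), ⟨by positivity, ?_⟩, t / 2, ⟨by positivity, by linarith⟩, ?_⟩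
  · rw [div_le_one h2]; linarith
  · match_scalars <;> field_simp <;> ring

theorem segment_mem_cor (hS : Convex ℝ S) (hc : c ∈ algCor S) (hx : x ∈ S) {t : ℝ}
    (ht : t ∈ Set.Ioc (0 : ℝ) 1) : t • c + (1 - t) • x ∈ algCor S := by
  obtain ⟨h0, h1⟩ := ht
  intro y
  obtain ⟨lb, hlb, h⟩ := hc y
  refine ⟨t * lb, by positivity, fun l hl => ?_⟩
  have hm : c + (l / t) • y ∈ S := by
    refine h _ ⟨div_nonneg hl.1 h0.le, ?_⟩
    rw [div_le_iff₀ h0]; linarith [hl.2]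
  have := hS hm hx h0.le (sub_nonneg.2 h1) (by ring)
  convert this using 1
  match_scalars <;> field_simp

theorem segment_algLin_mem (hS : Convex ℝ S) (hc : c ∈ algCor S) (hx : x ∈ algLin S) {t : ℝ}
    (ht : t ∈ Set.Ioc (0 : ℝ) 1) : t • c + (1 - t) • x ∈ S := by
  rcases hx with hx | ⟨a, ha, -, hs⟩
  · exact algCor_subset S (segment_mem_cor hS hc hx ht)
  obtain ⟨h0, h1⟩ := ht
  rcases h1.eq_or_lt with rfl | h1
  · simpa using algCor_subset S hc
  obtain ⟨lb, hlb, h⟩ := hc (x - a)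
  have h1' : 0 < 1 - t := by linarith
  -- Moving from `c` by `s • (x - a)` compensates for replacing `x` by the point of the segment
  -- from `a` to `x` with parameter `t * s / (1 - t)`; `s ≤ 1 - t` keeps that parameter `≤ 1`.
  obtain ⟨s, hs0, hs1, hs2⟩ : ∃ s : ℝ, 0 < s ∧ s ≤ lb ∧ s ≤ 1 - t :=
    ⟨min lb (1 - t), lt_min hlb h1', min_le_left _ _, min_le_right _ _⟩
  have hp := h s ⟨hs0.le, hs1⟩
  have hq := hs (t * s / (1 - t)) ⟨by positivity, by rw [div_le_one h1']; nlinarith⟩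
  have := hS hp hq h0.le h1'.le (by ring)
  convert this using 1
  match_scalars <;> field_simp <;> ring

/-- The half-open segment from a core point to a point of the algebraic closure stays in the
core. -/
theorem segment_algLin_mem_cor (hS : Convex ℝ S) (hc : c ∈ algCor S) (hx : x ∈ algLin S) {t : ℝ}
    (ht : t ∈ Set.Ioc (0 : ℝ) 1) : t • c + (1 - t) • x ∈ algCor S := by
  obtain ⟨u, hu, v, hv, h⟩ := exists_resplit c x ht
  rw [h]
  exact segment_mem_cor hS hc (segment_algLin_mem hS hc hx hv) hu

theorem convex_algLin (hS : Convex ℝ S) (hc : (algCor S).Nonempty) : Convex ℝ (algLin S) := by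
  obtain ⟨c, hc⟩ := hc
  intro x hx y hy a b ha hb hab
  refine mem_algLin_of_segment (algCor_subset S hc) fun t ht => ?_
  have := hS (segment_algLin_mem hS hc hx ht) (segment_algLin_mem hS hc hy ht) ha hb hab
  convert this using 1
  obtain rfl : b = 1 - a := by linarith
  module

theorem convex_algCor (hS : Convex ℝ S) : Convex ℝ (algCor S) := by
  intro x hx y hy a b ha hb hab
  obtain rfl : b = 1 - a := by linarith
  rcases ha.eq_or_lt with rfl | ha
  · simpa using hy
  · exact segment_mem_cor hS hx (algCor_subset S hy) ⟨ha, by linarith⟩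

theorem algCor_algLin_nonempty (hc : (algCor S).Nonempty) : (algCor (algLin S)).Nonempty :=
  hc.mono (algCor_mono Set.subset_union_left)

theorem algLin_algLin (hS : Convex ℝ S) (hc : (algCor S).Nonempty) :
    algLin (algLin S) = algLin S := by
  refine Set.Subset.antisymm ?_ Set.subset_union_left
  have hconv := convex_algLin hS hc
  obtain ⟨c, hc⟩ := hc
  intro x hx
  refine mem_algLin_of_segment (algCor_subset S hc) fun t ht => ?_
  obtain ⟨u, hu, v, hv, h⟩ := exists_resplit c x ht
  rw [h]
  exact segment_algLin_mem hS hc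
    (segment_algLin_mem hconv (algCor_mono Set.subset_union_left hc) hx hv) hu

theorem algLin_algCor (hS : Convex ℝ S) (hc : (algCor S).Nonempty) :
    algLin (algCor S) = algLin S := by
  refine Set.Subset.antisymm (algLin_mono (algCor_subset S)) ?_
  obtain ⟨c, hc⟩ := hc
  exact fun x hx => mem_algLin_of_segment hc fun t ht => segment_algLin_mem_cor hS hc hx ht

theorem algCor_algCor (hS : Convex ℝ S) : algCor (algCor S) = algCor S := by
  refine Set.Subset.antisymm (algCor_subset _) ?_
  intro x hx y
  obtain ⟨lb, hlb, h⟩ := hx y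
  refine ⟨lb / 2, by positivity, fun l hl => ?_⟩
  -- `x + l • y` is the midpoint of `x` and `x + (2 * l) • y`.
  have := segment_mem_cor hS hx (h (2 * l) ⟨by linarith [hl.1], by linarith [hl.2]⟩)
    (t := 1 / 2) ⟨by norm_num, by norm_num⟩
  convert this using 1
  module

/-- For a convex set, the core is the dual of the algebraic closure under complementation. -/
theorem compl_algLin_compl (hS : Convex ℝ S) : (algLin Sᶜ)ᶜ = algCor S := by
  ext x
  constructor
  · intro hx y
    have hxS : x ∈ S := by
      by_contra h
      exact hx (Or.inl h)
    by_cases hy : y = 0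
    · exact ⟨1, one_pos, fun l _ => by simpa [hy] using hxS⟩
    -- Some point of the half-open segment from `x + y` to `x` lies in `S`, as `x` is not
    -- accessible from the complement.
    obtain ⟨l, hl, hlS⟩ : ∃ l ∈ Set.Ioc (0 : ℝ) 1, x + l • y ∈ S := by
      by_contra! hno
      refine hx (Or.inr ⟨x + y, ?_, by simpa using hy, fun l hl => ?_⟩)
      · simpa using hno 1 ⟨one_pos, le_rfl⟩
      · have := hno l hl
        rwa [show x + l • y = l • (x + y) + (1 - l) • x by module] at this
    have hl0 := hl.1
    refine ⟨l, hl0, fun m hm => ?_⟩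
    have := hS hlS hxS (div_nonneg hm.1 hl0.le)
      (sub_nonneg.2 ((div_le_one hl0).2 hm.2)) (by ring)
    convert this using 1
    match_scalars <;> field_simp <;> ring
  · rintro hx (h | ⟨a, -, -, hs⟩)
    · exact h (algCor_subset S hx)
    · obtain ⟨lb, hlb, h⟩ := hx (a - x)
      have hm : 0 < min lb 1 := lt_min hlb one_pos
      refine hs (min lb 1) ⟨hm, min_le_right _ _⟩ ?_
      have := h (min lb 1) ⟨hm.le, min_le_left _ _⟩
      rwa [show x + (min lb 1) • (a - x) = (min lb 1) • a + (1 - min lb 1) • x by module] at this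

theorem algLin_algLin_compl (hS : Convex ℝ S) : algLin (algLin Sᶜ) = algLin Sᶜ := by
  have h : algLin Sᶜ = (algCor S)ᶜ := by rw [← compl_algLin_compl hS, compl_compl]
  rw [h, ← compl_inj_iff, compl_algLin_compl (convex_algCor hS), algCor_algCor hS, compl_compl]

theorem algLin_compl_algLin_compl (hS : Convex ℝ S) (hc : (algCor S).Nonempty) :
    algLin (algLin Sᶜ)ᶜ = algLin S := by
  rw [compl_algLin_compl hS, algLin_algCor hS hc]

end Aux

theorem stmt13 {X : Type*} [AddCommGroup X] [Module ℝ X]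
    (A : Set X) (hA : A.Nonempty) (hconv : Convex ℝ A)
    (hcor : (algCor A).Nonempty) :
    (∀ w : List KOp,
      applyKOps w A ∈
        ({A, Aᶜ, algLin A, (algLin A)ᶜ, algLin Aᶜ, (algLin Aᶜ)ᶜ,
          algLin (algLin A)ᶜ, (algLin (algLin A)ᶜ)ᶜ} : Set (Set X))) ∧
    Set.ncard {B : Set X | ∃ w : List KOp, applyKOps w A = B} ≤ 8 := by
  have key : ∀ w : List KOp,
      applyKOps w A ∈
        ({A, Aᶜ, algLin A, (algLin A)ᶜ, algLin Aᶜ, (algLin Aᶜ)ᶜ,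
          algLin (algLin A)ᶜ, (algLin (algLin A)ᶜ)ᶜ} : Set (Set X)) := by
    have hconv' := convex_algLin hconv hcor
    have hcor' := algCor_algLin_nonempty hcor
    have e1 := algLin_algLin hconv hcor
    have e2 := algLin_algLin_compl hconv
    have e3 := algLin_compl_algLin_compl hconv hcor
    have e4 := algLin_algLin_compl hconv'
    have e5 := algLin_compl_algLin_compl hconv' hcor'
    rw [e1] at e5
    intro w
    induction w with
    | nil => simp [applyKOps]
    | cons o w ih =>
      have hstep : applyKOps (o :: w) A = applyKOp o (applyKOps w A) := rfl
      rw [hstep]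
      generalize applyKOps w A = B at ih
      simp only [Set.mem_insert_iff, Set.mem_singleton_iff] at ih ⊢
      cases o <;> simp only [applyKOp] <;>
        rcases ih with rfl | rfl | rfl | rfl | rfl | rfl | rfl | rfl <;>
        simp only [e1, e2, e3, e4, e5, compl_compl, true_or, or_true]
  refine ⟨key, ?_⟩
  refine (Set.ncard_le_ncard (t := {A, Aᶜ, algLin A, (algLin A)ᶜ, algLin Aᶜ, (algLin Aᶜ)ᶜ,
    algLin (algLin A)ᶜ, (algLin (algLin A)ᶜ)ᶜ}) ?_ (Set.toFinite _)).trans ?_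
  · rintro B ⟨w, rfl⟩
    exact key w
  · iterate 7 refine (Set.ncard_insert_le _ _).trans (Nat.succ_le_succ ?_)
    exact (Set.ncard_singleton _).le
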